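/- Let J⊂K with J≠K and U_J≠∅ be given and suppose one of the hypotheses (b), (d1b), (J) is satisfied. Then there are an open subset 𝒪_J of C^1_n with X_{fJ} ⊂ X_f∩𝒪_J and a diffeomorphism A_J from 𝒪_J onto an open subset of C^1_n such that A_J(φ)=R^J(φ) for every φ∈X_f∩𝒪_J ⊂ N_J, A_J(χ)=χ for every χ∈X_0∩(X_f∩𝒪_J), and A_J(X_f∩𝒪_J) = X_0∩A_J(𝒪_J). -/

import Mathlib

open Set

noncomputable section

/-- The compact interval `[-r,0]`. -/
abbrev Icc0 (r : ℝ) : Set ℝ := Set.Icc (-r) 0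

/-- Extension of a continuous map on `[-r,0]` to `ℝ`, by the value `0` outside. -/
def extFun {r : ℝ} {E : Type*} [TopologicalSpace E] [Zero E] (φ : C(Icc0 r, E)) : ℝ → E :=
  fun t => if h : t ∈ Icc0 r then φ ⟨t, h⟩ else 0

section extlemmas

variable {r : ℝ} {E : Type*} [NormedAddCommGroup E] [NormedSpace ℝ E]

lemma extFun_add (φ ψ : C(Icc0 r, E)) : extFun (φ + ψ) = extFun φ + extFun ψ := by
  funext t; by_cases h : t ∈ Icc0 r <;> simp [extFun, h]

lemma extFun_zero : extFun (0 : C(Icc0 r, E)) = 0 := by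
  funext t; by_cases h : t ∈ Icc0 r <;> simp [extFun, h]

lemma extFun_smul (c : ℝ) (φ : C(Icc0 r, E)) : extFun (c • φ) = c • extFun φ := by
  funext t; by_cases h : t ∈ Icc0 r <;> simp [extFun, h]

end extlemmas

/-- The space `C¹([-r,0],E)`, realized as the closed subspace of pairs `(φ, φ')` in
`C([-r,0],E) × C([-r,0],E)` such that `φ` is differentiable on `[-r,0]` with derivative `φ'`. -/
def C1sub (r : ℝ) (E : Type*) [NormedAddCommGroup E] [NormedSpace ℝ E] :
    Submodule ℝ (C(Icc0 r, E) × C(Icc0 r, E)) where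
  carrier := {p | ∀ t ∈ Icc0 r, HasDerivWithinAt (extFun p.1) (extFun p.2 t) (Icc0 r) t}
  add_mem' := by
    intro p q hp hq t ht
    have h := (hp t ht).add (hq t ht)
    have e1 : extFun (p + q).1 = fun s => extFun p.1 s + extFun q.1 s := by
      simp [Prod.fst_add, extFun_add]; rfl
    have e2 : extFun (p + q).2 t = extFun p.2 t + extFun q.2 t := by
      simp [Prod.snd_add, extFun_add]
    rw [e1, e2]; exact h
  zero_mem' := by
    intro t ht
    have e1 : extFun (0 : C(Icc0 r, E) × C(Icc0 r, E)).1 = fun _ : ℝ => (0 : E) := by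
      simp [extFun_zero]; rfl
    have e2 : extFun (0 : C(Icc0 r, E) × C(Icc0 r, E)).2 t = 0 := by
      simp [extFun_zero]
    rw [e1, e2]; exact hasDerivWithinAt_const _ _ _
  smul_mem' := by
    intro c p hp t ht
    have h := (hp t ht).const_smul c
    have e1 : extFun (c • p).1 = fun s => c • extFun p.1 s := by
      simp [Prod.smul_fst, extFun_smul]; rfl
    have e2 : extFun (c • p).2 t = c • extFun p.2 t := by
      simp [Prod.smul_snd, extFun_smul]
    rw [e1, e2]; exact h

/-- The Banach space `C¹([-r,0],E)`. -/
abbrev C1 (r : ℝ) (E : Type*) [NormedAddCommGroup E] [NormedSpace ℝ E] := ↥(C1sub r E)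

section C1ops

variable {r : ℝ} {E : Type*} [NormedAddCommGroup E] [NormedSpace ℝ E]

/-- Evaluation `φ(t)` of `φ ∈ C¹([-r,0],E)` (extended by `0` outside `[-r,0]`). -/
def evC (φ : C1 r E) (t : ℝ) : E := extFun φ.1.1 t

/-- Evaluation `φ'(t)` of the derivative of `φ ∈ C¹([-r,0],E)`. -/
def dvC (φ : C1 r E) (t : ℝ) : E := extFun φ.1.2 t

end C1ops

/-- The continuous linear map `ℝ → (Fin n → ℝ)` sending `x` to the vector `x·e_ν`. -/
def sCLM (n : ℕ) (ν : Fin n) : ℝ →L[ℝ] (Fin n → ℝ) :=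
  ContinuousLinearMap.pi (fun j => if j = ν then ContinuousLinearMap.id ℝ ℝ else 0)

/-- `ψ · e_ν` for a continuous map `ψ`. -/
def CMsingle {r : ℝ} {n : ℕ} (ν : Fin n) (φ : C(Icc0 r, ℝ)) : C(Icc0 r, Fin n → ℝ) :=
  ⟨fun t => sCLM n ν (φ t), (sCLM n ν).continuous.comp φ.continuous⟩

lemma extFun_CMsingle {r : ℝ} {n : ℕ} (ν : Fin n) (φ : C(Icc0 r, ℝ)) (t : ℝ) :
    extFun (CMsingle ν φ) t = sCLM n ν (extFun φ t) := by
  by_cases h : t ∈ Icc0 r <;> simp [extFun, CMsingle, h]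

/-- `ψ · e_ν ∈ C¹([-r,0],ℝⁿ)` for a scalar function `ψ ∈ C¹([-r,0],ℝ)`. -/
def singleC1 {r : ℝ} {n : ℕ} (ν : Fin n) (φ : C1 r ℝ) : C1 r (Fin n → ℝ) :=
  ⟨(CMsingle ν φ.1.1, CMsingle ν φ.1.2), by
    intro t ht
    have h := ((sCLM n ν).hasFDerivAt).comp_hasDerivWithinAt t (φ.2 t ht)
    have e1 : extFun (CMsingle ν φ.1.1) = (sCLM n ν) ∘ (extFun φ.1.1) := by
      funext s; exact extFun_CMsingle ν φ.1.1 s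
    rw [show (CMsingle ν φ.1.1, CMsingle ν φ.1.2).1 = CMsingle ν φ.1.1 from rfl,
      show (CMsingle ν φ.1.1, CMsingle ν φ.1.2).2 = CMsingle ν φ.1.2 from rfl,
      e1, extFun_CMsingle]
    exact h⟩

/-- The linear map `ℝⁿ → C¹([-r,0],ℝⁿ)`, `x ↦ Σ_ν x_ν ψ_ν · e_ν` (the map `Y·x`). -/
def Ymap {r : ℝ} {n : ℕ} (ψ : Fin n → C1 r ℝ) : (Fin n → ℝ) →ₗ[ℝ] C1 r (Fin n → ℝ) where
  toFun x := ∑ ν, x ν • singleC1 ν (ψ ν)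
  map_add' x y := by simp [add_smul, Finset.sum_add_distrib]
  map_smul' c x := by simp [smul_smul, Finset.smul_sum]

/-- The closed subspace `X₀ = {φ ∈ C¹ : φ'(0) = 0}`. -/
def X0sub (r : ℝ) (n : ℕ) : Submodule ℝ (C1 r (Fin n → ℝ)) where
  carrier := {φ | dvC φ 0 = 0}
  add_mem' := by
    intro φ ψ hφ hψ
    have : dvC (φ + ψ) 0 = dvC φ 0 + dvC ψ 0 := by
      simp [dvC, extFun_add]
    rw [Set.mem_setOf_eq] at *
    rw [this, hφ, hψ, add_zero]
  zero_mem' := by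
    show dvC (0 : C1 r (Fin n → ℝ)) 0 = 0
    simp [dvC, extFun_zero]
  smul_mem' := by
    intro c φ hφ
    have : dvC (c • φ) 0 = c • dvC φ 0 := by simp [dvC, extFun_smul]
    rw [Set.mem_setOf_eq] at *
    rw [this, hφ, smul_zero]

/-- The projection-like map `R φ = φ − Y·φ'(0)`. -/
def RKmap {r : ℝ} {n : ℕ} (ψ : Fin n → C1 r ℝ) (φ : C1 r (Fin n → ℝ)) : C1 r (Fin n → ℝ) :=
  φ - Ymap ψ (dvC φ 0)

section diffeos

variable {E : Type*} [NormedAddCommGroup E] [NormedSpace ℝ E]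
variable {E' : Type*} [NormedAddCommGroup E'] [NormedSpace ℝ E']

/-- `f` defines a `C¹`-diffeomorphism from `s` onto `t`: `f` is continuously differentiable
on `s`, injective on `s`, maps `s` onto `t`, and has a continuously differentiable inverse. -/
def IsC1DiffeoOn (f : E → E') (s : Set E) (t : Set E') : Prop :=
  ContDiffOn ℝ 1 f s ∧ Set.InjOn f s ∧ f '' s = t ∧
    ∃ g : E' → E, ContDiffOn ℝ 1 g t ∧ Set.InvOn g f s t

/-- The tangent cone of `X ⊆ E` at `x`: all velocities `c'(0)` of continuously differentiable
curves in `X` through `x`. -/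
def tangentSet (X : Set E) (x : E) : Set E :=
  {v | ∃ (c : ℝ → E) (ε : ℝ), 0 < ε ∧ ContDiffOn ℝ 1 c (Set.Ioo (-ε) ε) ∧
      (∀ s ∈ Set.Ioo (-ε) ε, c s ∈ X) ∧ c 0 = x ∧ HasDerivWithinAt c v (Set.Ioo (-ε) ε) 0}

/-- `X` is a continuously differentiable submanifold of codimension `m` of `E`. -/
def IsC1SubmanifoldCodim (X : Set E) (m : ℕ) : Prop :=
  ∀ x ∈ X, ∃ (O : Set E) (Φ : E → E) (H Q : Submodule ℝ E),
    IsOpen O ∧ x ∈ O ∧ IsClosed (H : Set E) ∧ IsCompl H Q ∧ Module.finrank ℝ Q = m ∧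
    IsOpen (Φ '' O) ∧ IsC1DiffeoOn Φ O (Φ '' O) ∧ Φ '' (X ∩ O) = (H : Set E) ∩ (Φ '' O)

/-- `X` is a continuously differentiable submanifold of `E`. -/
def IsC1Submanifold (X : Set E) : Prop :=
  ∀ x ∈ X, ∃ (O : Set E) (Φ : E → E) (H : Submodule ℝ E),
    IsOpen O ∧ x ∈ O ∧ IsClosed (H : Set E) ∧
    IsOpen (Φ '' O) ∧ IsC1DiffeoOn Φ O (Φ '' O) ∧ Φ '' (X ∩ O) = (H : Set E) ∩ (Φ '' O)

/-- `A` is an almost graph over `H`. -/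
def IsAlmostGraphOver (A : Set E) (H : Set E) : Prop :=
  ∃ (dm : Set E) (α : E → E), dm ⊆ H ∧ ContDiffOn ℝ 1 α dm ∧
    (∀ ζ ∈ dm ∩ A, α ζ = 0) ∧ (∀ ζ ∈ dm \ A, α ζ ∉ H) ∧
    IsC1DiffeoOn (fun ζ => ζ + α ζ) dm A

end diffeos

/-- The data of the delay differential system
`x'(t) = g(x(t-d_1(Lx_t)),…,x(t-d_kk(Lx_t)))`. -/
structure Setting (r : ℝ) (n kk : ℕ) (F : Type*) [NormedAddCommGroup F] [NormedSpace ℝ F] where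
  /-- The continuous linear map `L : C([-r,0],ℝⁿ) → F`. -/
  L : C(Icc0 r, Fin n → ℝ) →L[ℝ] F
  /-- The open set `W ⊆ F`. -/
  W : Set F
  Wopen : IsOpen W
  /-- The delay functions `d_k : W → [0,r]`. -/
  d : Fin kk → F → ℝ
  d_smooth : ∀ k, ContDiffOn ℝ 1 (d k) W
  d_mem : ∀ k, ∀ w ∈ W, d k w ∈ Set.Icc (0:ℝ) r
  /-- The open set `V ⊆ (ℝⁿ)^kk`. -/
  V : Set (Fin kk → Fin n → ℝ)
  Vopen : IsOpen V
  /-- The right hand side function `g : V → ℝⁿ`. -/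
  g : (Fin kk → Fin n → ℝ) → Fin n → ℝ
  g_smooth : ContDiffOn ℝ 1 g V

namespace Setting

variable {r : ℝ} {n kk : ℕ} {F : Type*} [NormedAddCommGroup F] [NormedSpace ℝ F]
variable (S : Setting r n kk F)

/-- `L` applied to (the `C⁰`-part of) `φ ∈ C¹`. -/
def Lof (φ : C1 r (Fin n → ℝ)) : F := S.L φ.1.1

/-- `φ̂ = (φ(-d_1(Lφ)),…,φ(-d_kk(Lφ)))`. -/
def hat (φ : C1 r (Fin n → ℝ)) : Fin kk → Fin n → ℝ := fun k => evC φ (-(S.d k (S.Lof φ)))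

/-- The domain `U = {φ ∈ C¹ : Lφ ∈ W, φ̂ ∈ V}`. -/
def U : Set (C1 r (Fin n → ℝ)) := {φ | S.Lof φ ∈ S.W ∧ S.hat φ ∈ S.V}

/-- The right hand side `f(φ) = g(φ̂)`. -/
def fmap (φ : C1 r (Fin n → ℝ)) : Fin n → ℝ := S.g (S.hat φ)

/-- The solution manifold `X_f = {φ ∈ U : φ'(0) = f(φ)}`. -/
def Xf : Set (C1 r (Fin n → ℝ)) := {φ | φ ∈ S.U ∧ dvC φ 0 = S.fmap φ}

/-- `W_J = {w ∈ W : d_j(w)=0 for j∈J, d_k(w)>0 for k∉J}`. -/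
def WJ (J : Finset (Fin kk)) : Set F :=
  {w | w ∈ S.W ∧ (∀ j ∈ J, S.d j w = 0) ∧ ∀ k ∉ J, 0 < S.d k w}

/-- `W^J = {w ∈ W : d_k(w)>0 for k∉J}`. -/
def WupJ (J : Finset (Fin kk)) : Set F :=
  {w | w ∈ S.W ∧ ∀ k ∉ J, 0 < S.d k w}

/-- `U_J = U ∩ L⁻¹(W_J)`. -/
def UJ (J : Finset (Fin kk)) : Set (C1 r (Fin n → ℝ)) := {φ | φ ∈ S.U ∧ S.Lof φ ∈ S.WJ J}

/-- `U^J = U ∩ L⁻¹(W^J)`. -/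
def UupJ (J : Finset (Fin kk)) : Set (C1 r (Fin n → ℝ)) := {φ | φ ∈ S.U ∧ S.Lof φ ∈ S.WupJ J}

/-- `X_{fJ} = X_f ∩ U_J`. -/
def XfJ (J : Finset (Fin kk)) : Set (C1 r (Fin n → ℝ)) := S.Xf ∩ S.UJ J

/-- Hypothesis (b): `g` is bounded. -/
def HypB : Prop := ∃ M, ∀ v ∈ S.V, ‖S.g v‖ ≤ M

/-- Hypothesis (d1b): `d₁ = 0` on `W` and `g` is bounded on subsets of `V` with bounded
first component. -/
def HypD1B (hk : 0 < kk) : Prop :=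
  (∀ w ∈ S.W, S.d ⟨0, hk⟩ w = 0) ∧
  ∀ B : Set (Fin n → ℝ), Bornology.IsBounded B →
    Bornology.IsBounded (S.g '' {v | v ∈ S.V ∧ v ⟨0, hk⟩ ∈ B})

/-- The partial derivative `∂_{(k-1)n+ν} g_μ (φ̂)`. -/
def dgCoeff (φ : C1 r (Fin n → ℝ)) (k : Fin kk) (ν : Fin n) (μ : Fin n) : ℝ :=
  fderivWithin ℝ S.g S.V (S.hat φ) (Pi.single k (Pi.single ν 1)) μ

/-- The right hand side of the formula for `Df_μ(φ)χ`. -/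
def dFormula (φ χ : C1 r (Fin n → ℝ)) (μ : Fin n) : ℝ :=
  ∑ k, ∑ ν, S.dgCoeff φ k ν μ *
    (evC χ (-(S.d k (S.Lof φ))) ν -
      dvC φ (-(S.d k (S.Lof φ))) ν * fderivWithin ℝ (S.d k) S.W (S.Lof φ) (S.Lof χ))

/-- The map `R^J(φ) = φ − Y_J(Lφ)·φ'(0)` of Section 4 of the paper. -/
def RJmap (y : Fin n → F → C1 r ℝ) (φ : C1 r (Fin n → ℝ)) : C1 r (Fin n → ℝ) :=
  φ - Ymap (fun ν => y ν (S.Lof φ)) (dvC φ 0)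

end Setting


variable {r : ℝ} {n kk : ℕ} {F : Type*} [NormedAddCommGroup F] [NormedSpace ℝ F]
  [FiniteDimensional ℝ F]

/-!
On `Λ⁻¹(D)` the map `R φ = φ - Y(Λ φ)(δ φ)` is the projection onto `ker δ` along the fibres
`φ + range Y(Λ φ)`, and both `Λ` and `R` are constant on these fibres. For every map `c` of `R φ`,
translating each fibre by `Y(Λ φ)(c(R φ))` is therefore a bijection whose inverse is the
translation by `-c`. If `R` restricts to a diffeomorphism from a manifold `N` onto an open subset
of `ker δ`, with inverse `σ`, then `N` meets the fibre over `ζ` only in `σ ζ`, and the translation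
by `c = -δ ∘ σ` moves this point to `ζ`: it straightens `N` and agrees with `R` there. In the
theorem `δ φ = φ'(0)` and `Λ = L`.
-/

lemma isOpen_image_of_invOn {α β : Type*} [TopologicalSpace α] [TopologicalSpace β] {f : α → β}
    {g : β → α} {s t : Set α} {s' : Set β} (hf : MapsTo f s s') (hg : MapsTo g s' s)
    (hinv : InvOn g f s s') (hcont : ContinuousOn g s') (hs' : IsOpen s') (ht : IsOpen t)
    (hts : t ⊆ s) : IsOpen (f '' t) := by
  have himage : f '' t = s' ∩ g ⁻¹' t := by
    rw [← inter_eq_left.2 hts, hinv.1.image_inter', (hinv.bijOn hf hg).image_eq, inter_comm,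
      inter_eq_left.2 hts]
  rw [himage]
  exact hcont.isOpen_inter_preimage hs' ht

lemma isC1DiffeoOn_image_of_invOn {E E' : Type*} [NormedAddCommGroup E] [NormedSpace ℝ E]
    [NormedAddCommGroup E'] [NormedSpace ℝ E'] {f : E → E'} {g : E' → E} {s t : Set E}
    {s' : Set E'} (hf : ContDiffOn ℝ 1 f s) (hg : ContDiffOn ℝ 1 g s') (hfs : MapsTo f s s')
    (hinv : InvOn g f s s') (hts : t ⊆ s) : IsC1DiffeoOn f t (f '' t) := by
  have himage : f '' t ⊆ s' := (hfs.mono_left hts).image_subset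
  exact ⟨hf.mono hts, hinv.1.injOn.mono hts, rfl, g, hg.mono himage, hinv.mono hts himage⟩

section Shear

variable {𝕜 E G B : Type*} [NontriviallyNormedField 𝕜] [NormedAddCommGroup E] [NormedSpace 𝕜 E]
  [NormedAddCommGroup G] [NormedSpace 𝕜 G] [NormedAddCommGroup B] [NormedSpace 𝕜 B]

/-- The linear maps `Y w`, `w ∈ D`, are right inverses of `δ` whose ranges lie in `ker Λ`: the
translations by `Y w x` move `δ` arbitrarily while staying in a fibre of `Λ`. -/
structure IsVerticalRightInverse (δ : E →L[𝕜] G) (Λ : E →L[𝕜] B) (Y : B → G →ₗ[𝕜] E)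
    (D : Set B) : Prop where
  map_vertical : ∀ w ∈ D, ∀ x, δ (Y w x) = x
  base_vertical : ∀ w ∈ D, ∀ x, Λ (Y w x) = 0

/-- The projection `R φ = φ - Y(Λ φ)(δ φ)` onto `ker δ` along the ranges of the maps `Y w`. -/
def verticalProj (δ : E →L[𝕜] G) (Λ : E →L[𝕜] B) (Y : B → G →ₗ[𝕜] E) (φ : E) : E :=
  φ - Y (Λ φ) (δ φ)

/-- The translation `φ ↦ φ + Y(Λ φ)(c(R φ))` of each fibre of `(Λ, R)` by an amount that depends
on the fibre only, where `R` is the vertical projection. -/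
def verticalShear (δ : E →L[𝕜] G) (Λ : E →L[𝕜] B) (Y : B → G →ₗ[𝕜] E) (c : E → G) (φ : E) : E :=
  φ + Y (Λ φ) (c (verticalProj δ Λ Y φ))

variable {δ : E →L[𝕜] G} {Λ : E →L[𝕜] B} {Y : B → G →ₗ[𝕜] E} {D : Set B} {φ ψ : E}

lemma verticalProj_of_map_eq_zero (hφ : δ φ = 0) : verticalProj δ Λ Y φ = φ := by
  simp [verticalProj, hφ]

namespace IsVerticalRightInverse

lemma map_verticalProj (h : IsVerticalRightInverse δ Λ Y D) (hφ : Λ φ ∈ D) :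
    δ (verticalProj δ Λ Y φ) = 0 := by
  simp [verticalProj, h.map_vertical _ hφ]

lemma base_verticalProj (h : IsVerticalRightInverse δ Λ Y D) (hφ : Λ φ ∈ D) :
    Λ (verticalProj δ Λ Y φ) = Λ φ := by
  simp [verticalProj, h.base_vertical _ hφ]

lemma eq_of_verticalProj_eq (h : IsVerticalRightInverse δ Λ Y D) (hφ : Λ φ ∈ D) (hψ : Λ ψ ∈ D)
    (hproj : verticalProj δ Λ Y φ = verticalProj δ Λ Y ψ) (hmap : δ φ = δ ψ) : φ = ψ := by
  have hbase : Λ φ = Λ ψ := by rw [← h.base_verticalProj hφ, hproj, h.base_verticalProj hψ]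
  rw [verticalProj, verticalProj, hbase, hmap] at hproj
  exact sub_left_injective hproj

lemma map_verticalShear (h : IsVerticalRightInverse δ Λ Y D) (hφ : Λ φ ∈ D) (c : E → G) :
    δ (verticalShear δ Λ Y c φ) = δ φ + c (verticalProj δ Λ Y φ) := by
  simp [verticalShear, h.map_vertical _ hφ]

lemma base_verticalShear (h : IsVerticalRightInverse δ Λ Y D) (hφ : Λ φ ∈ D) (c : E → G) :
    Λ (verticalShear δ Λ Y c φ) = Λ φ := by
  simp [verticalShear, h.base_vertical _ hφ]

lemma verticalProj_verticalShear (h : IsVerticalRightInverse δ Λ Y D) (hφ : Λ φ ∈ D)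
    (c : E → G) : verticalProj δ Λ Y (verticalShear δ Λ Y c φ) = verticalProj δ Λ Y φ := by
  rw [verticalProj, h.base_verticalShear hφ, h.map_verticalShear hφ, map_add, verticalShear,
    add_sub_add_right_eq_sub, verticalProj]

lemma verticalShear_neg_verticalShear (h : IsVerticalRightInverse δ Λ Y D) (hφ : Λ φ ∈ D)
    (c : E → G) : verticalShear δ Λ Y (-c) (verticalShear δ Λ Y c φ) = φ := by
  rw [verticalShear, h.base_verticalShear hφ, h.verticalProj_verticalShear hφ, Pi.neg_apply,
    map_neg, verticalShear, add_neg_cancel_right]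

lemma invOn_verticalShear (h : IsVerticalRightInverse δ Λ Y D) (c : E → G) :
    InvOn (verticalShear δ Λ Y (-c)) (verticalShear δ Λ Y c) (Λ ⁻¹' D) (Λ ⁻¹' D) :=
  ⟨fun _ hφ ↦ h.verticalShear_neg_verticalShear hφ c, fun φ hφ ↦ by
    simpa only [neg_neg] using h.verticalShear_neg_verticalShear hφ (-c)⟩

end IsVerticalRightInverse

section Smooth

variable {m : WithTop ℕ∞} {s : Set E} {c : E → G}

lemma contDiffOn_vertical_comp
    (hY : ContDiffOn 𝕜 m (fun p : B × G ↦ Y p.1 p.2) (D ×ˢ univ)) (hs : s ⊆ Λ ⁻¹' D)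
    (hc : ContDiffOn 𝕜 m c s) : ContDiffOn 𝕜 m (fun φ ↦ Y (Λ φ) (c φ)) s :=
  hY.comp (Λ.contDiff.contDiffOn.prodMk hc) fun _ hφ ↦ ⟨hs hφ, mem_univ _⟩

lemma contDiffOn_verticalProj
    (hY : ContDiffOn 𝕜 m (fun p : B × G ↦ Y p.1 p.2) (D ×ˢ univ)) :
    ContDiffOn 𝕜 m (verticalProj δ Λ Y) (Λ ⁻¹' D) :=
  contDiffOn_id.sub (contDiffOn_vertical_comp hY subset_rfl δ.contDiff.contDiffOn)

lemma contDiffOn_verticalShear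
    (hY : ContDiffOn 𝕜 m (fun p : B × G ↦ Y p.1 p.2) (D ×ˢ univ)) (hs : s ⊆ Λ ⁻¹' D)
    (hc : ContDiffOn 𝕜 m (fun φ ↦ c (verticalProj δ Λ Y φ)) s) :
    ContDiffOn 𝕜 m (verticalShear δ Λ Y c) s :=
  contDiffOn_id.add (contDiffOn_vertical_comp hY hs hc)

end Smooth

section Straightening

/-- The points over `D` whose vertical projection lies in `T` and is mapped by `σ` to a point
over `D`. It is a union of fibres of `(Λ, R)`, hence invariant under vertical shears. -/
def straighteningDomain (δ : E →L[𝕜] G) (Λ : E →L[𝕜] B) (Y : B → G →ₗ[𝕜] E) (D : Set B)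
    (T : Set E) (σ : E → E) : Set E :=
  Λ ⁻¹' D ∩ verticalProj δ Λ Y ⁻¹' T ∩ (fun φ ↦ σ (verticalProj δ Λ Y φ)) ⁻¹' (Λ ⁻¹' D)

/-- The vertical shear that moves the point `σ ζ` of the fibre over `ζ` to `ζ`. -/
def straightening (δ : E →L[𝕜] G) (Λ : E →L[𝕜] B) (Y : B → G →ₗ[𝕜] E) (σ : E → E) : E → E :=
  verticalShear δ Λ Y (-(δ ∘ σ))

variable {σ : E → E} {N T : Set E} {m : WithTop ℕ∞}

lemma mapsTo_verticalShear_straighteningDomain (h : IsVerticalRightInverse δ Λ Y D)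
    (c : E → G) : MapsTo (verticalShear δ Λ Y c) (straighteningDomain δ Λ Y D T σ)
      (straighteningDomain δ Λ Y D T σ) := by
  intro φ hφ
  have hD : Λ φ ∈ D := hφ.1.1
  simp only [straighteningDomain, mem_inter_iff, mem_preimage, h.base_verticalShear hD,
    h.verticalProj_verticalShear hD]
  exact hφ

lemma invOn_verticalShear_straighteningDomain (h : IsVerticalRightInverse δ Λ Y D) (c : E → G) :
    InvOn (verticalShear δ Λ Y (-c)) (verticalShear δ Λ Y c)
      (straighteningDomain δ Λ Y D T σ) (straighteningDomain δ Λ Y D T σ) :=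
  (h.invOn_verticalShear c).mono (fun _ hφ ↦ hφ.1.1) (fun _ hφ ↦ hφ.1.1)

lemma inter_preimage_subset_straighteningDomain (hT : verticalProj δ Λ Y '' N ⊆ T)
    (hinv : LeftInvOn σ (verticalProj δ Λ Y) N) :
    N ∩ Λ ⁻¹' D ⊆ straighteningDomain δ Λ Y D T σ := fun φ hφ ↦
  ⟨⟨hφ.2, hT (mem_image_of_mem _ hφ.1)⟩, by
    simpa only [mem_preimage, hinv hφ.1] using hφ.2⟩

lemma eqOn_straightening_verticalProj (hinv : LeftInvOn σ (verticalProj δ Λ Y) N) :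
    EqOn (straightening δ Λ Y σ) (verticalProj δ Λ Y) N := fun φ hφ ↦ by
  rw [straightening, verticalShear, Pi.neg_apply, Function.comp_apply, hinv hφ, map_neg,
    ← sub_eq_add_neg, verticalProj]

lemma map_straightening_eq_zero_iff (h : IsVerticalRightInverse δ Λ Y D)
    (hN : verticalProj δ Λ Y '' N = {ζ | δ ζ = 0} ∩ T)
    (hinv : LeftInvOn σ (verticalProj δ Λ Y) N) {φ : E}
    (hφ : φ ∈ straighteningDomain δ Λ Y D T σ) :
    δ (straightening δ Λ Y σ φ) = 0 ↔ φ ∈ N := by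
  obtain ⟨⟨hD, hφT⟩, hσD⟩ := hφ
  obtain ⟨φ₀, hφ₀, hproj⟩ : verticalProj δ Λ Y φ ∈ verticalProj δ Λ Y '' N :=
    hN.superset ⟨h.map_verticalProj hD, hφT⟩
  have hσφ : σ (verticalProj δ Λ Y φ) = φ₀ := by rw [← hproj, hinv hφ₀]
  have hφ₀D : Λ φ₀ ∈ D := by simpa only [mem_preimage, hσφ] using hσD
  have hmap : δ (straightening δ Λ Y σ φ) = δ φ - δ φ₀ := by
    rw [straightening, h.map_verticalShear hD, Pi.neg_apply, Function.comp_apply, hσφ,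
      sub_eq_add_neg]
  rw [hmap, sub_eq_zero]
  constructor
  · intro hδ
    rwa [← h.eq_of_verticalProj_eq hφ₀D hD hproj hδ.symm]
  · intro hφN
    rw [← hσφ, hinv hφN]

lemma contDiffOn_comp_verticalProj (h : IsVerticalRightInverse δ Λ Y D)
    (hY : ContDiffOn 𝕜 m (fun p : B × G ↦ Y p.1 p.2) (D ×ˢ univ))
    (hσ : ContDiffOn 𝕜 m σ ({ζ | δ ζ = 0} ∩ T)) :
    ContDiffOn 𝕜 m (fun φ ↦ σ (verticalProj δ Λ Y φ))
      (Λ ⁻¹' D ∩ verticalProj δ Λ Y ⁻¹' T) :=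
  hσ.comp ((contDiffOn_verticalProj hY).mono inter_subset_left)
    fun _ hφ ↦ ⟨h.map_verticalProj hφ.1, hφ.2⟩

lemma isOpen_straighteningDomain (h : IsVerticalRightInverse δ Λ Y D)
    (hY : ContDiffOn 𝕜 m (fun p : B × G ↦ Y p.1 p.2) (D ×ˢ univ))
    (hσ : ContDiffOn 𝕜 m σ ({ζ | δ ζ = 0} ∩ T)) (hD : IsOpen D) (hT : IsOpen T) :
    IsOpen (straighteningDomain δ Λ Y D T σ) := by
  have hΛD : IsOpen (Λ ⁻¹' D) := hD.preimage Λ.continuous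
  have hdomain : IsOpen (Λ ⁻¹' D ∩ verticalProj δ Λ Y ⁻¹' T) :=
    (contDiffOn_verticalProj hY).continuousOn.isOpen_inter_preimage hΛD hT
  exact (contDiffOn_comp_verticalProj h hY hσ).continuousOn.isOpen_inter_preimage hdomain hΛD

lemma contDiffOn_map_comp_verticalProj (h : IsVerticalRightInverse δ Λ Y D)
    (hY : ContDiffOn 𝕜 m (fun p : B × G ↦ Y p.1 p.2) (D ×ˢ univ))
    (hσ : ContDiffOn 𝕜 m σ ({ζ | δ ζ = 0} ∩ T)) :
    ContDiffOn 𝕜 m (fun φ ↦ (δ ∘ σ) (verticalProj δ Λ Y φ))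
      (straighteningDomain δ Λ Y D T σ) :=
  δ.contDiff.comp_contDiffOn ((contDiffOn_comp_verticalProj h hY hσ).mono inter_subset_left)

end Straightening

end Shear

theorem exists_straightening {E G B : Type*} [NormedAddCommGroup E] [NormedSpace ℝ E]
    [NormedAddCommGroup G] [NormedSpace ℝ G] [NormedAddCommGroup B] [NormedSpace ℝ B]
    {δ : E →L[ℝ] G} {Λ : E →L[ℝ] B} {Y : B → G →ₗ[ℝ] E} {D : Set B} {X O T : Set E} {σ : E → E}
    (h : IsVerticalRightInverse δ Λ Y D)
    (hY : ContDiffOn ℝ 1 (fun p : B × G ↦ Y p.1 p.2) (D ×ˢ univ))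
    (hD : IsOpen D) (hO : IsOpen O) (hT : IsOpen T)
    (himage : verticalProj δ Λ Y '' (X ∩ O) = {ζ | δ ζ = 0} ∩ T)
    (hσ : ContDiffOn ℝ 1 σ (verticalProj δ Λ Y '' (X ∩ O)))
    (hinv : LeftInvOn σ (verticalProj δ Λ Y) (X ∩ O)) :
    ∃ (Ω : Set E) (A : E → E), IsOpen Ω ∧ X ∩ Ω = X ∩ O ∩ Λ ⁻¹' D ∧ IsOpen (A '' Ω) ∧
      IsC1DiffeoOn A Ω (A '' Ω) ∧ EqOn A (verticalProj δ Λ Y) (X ∩ Ω) ∧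
      A '' (X ∩ Ω) = {ζ | δ ζ = 0} ∩ A '' Ω := by
  rw [himage] at hσ
  set M := straighteningDomain δ Λ Y D T σ
  have hM : IsOpen M := isOpen_straighteningDomain h hY hσ hD hT
  have hc := contDiffOn_map_comp_verticalProj h hY hσ
  have hMD : M ⊆ Λ ⁻¹' D := fun _ hφ ↦ hφ.1.1
  have hA : ContDiffOn ℝ 1 (straightening δ Λ Y σ) M := contDiffOn_verticalShear hY hMD hc.neg
  have hA' : ContDiffOn ℝ 1 (verticalShear δ Λ Y (- -(δ ∘ σ))) M := by
    rw [neg_neg]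
    exact contDiffOn_verticalShear hY hMD hc
  have hmaps (c : E → G) : MapsTo (verticalShear δ Λ Y c) M M :=
    mapsTo_verticalShear_straighteningDomain h c
  have hinvM : InvOn (verticalShear δ Λ Y (- -(δ ∘ σ))) (straightening δ Λ Y σ) M M :=
    invOn_verticalShear_straighteningDomain h _
  have hsub : X ∩ O ∩ Λ ⁻¹' D ⊆ M :=
    inter_preimage_subset_straighteningDomain (himage.subset.trans inter_subset_right) hinv
  have hzero {φ : E} (hφ : φ ∈ M) : δ (straightening δ Λ Y σ φ) = 0 ↔ φ ∈ X ∩ O :=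
    map_straightening_eq_zero_iff h himage hinv hφ
  refine ⟨M ∩ O, straightening δ Λ Y σ, hM.inter hO, ?_,
    isOpen_image_of_invOn (hmaps _) (hmaps _) hinvM hA'.continuousOn hM (hM.inter hO)
      inter_subset_left,
    isC1DiffeoOn_image_of_invOn hA hA' (hmaps _) hinvM inter_subset_left,
    fun _ hφ ↦ eqOn_straightening_verticalProj hinv ⟨hφ.1, hφ.2.2⟩, ?_⟩
  · exact Set.Subset.antisymm (fun φ hφ ↦ ⟨⟨hφ.1, hφ.2.2⟩, hMD hφ.2.1⟩)
      fun φ hφ ↦ ⟨hφ.1.1, hsub hφ, hφ.1.2⟩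
  · ext ζ
    constructor
    · rintro ⟨φ, ⟨hφX, hφM, hφO⟩, rfl⟩
      exact ⟨(hzero hφM).2 ⟨hφX, hφO⟩, φ, ⟨hφM, hφO⟩, rfl⟩
    · rintro ⟨hζ, φ, hφ, rfl⟩
      exact ⟨φ, ⟨((hzero hφ.1).1 hζ).1, hφ⟩, rfl⟩

lemma contDiffOn_sum_smul {𝕜 ι B E : Type*} [NontriviallyNormedField 𝕜] [Fintype ι]
    [NormedAddCommGroup B] [NormedSpace 𝕜 B] [NormedAddCommGroup E] [NormedSpace 𝕜 E]
    {v : ι → B → E} {D : Set B} {m : WithTop ℕ∞} (hv : ∀ i, ContDiffOn 𝕜 m (v i) D) :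
    ContDiffOn 𝕜 m (fun p : B × (ι → 𝕜) ↦ ∑ i, p.2 i • v i p.1) (D ×ˢ univ) :=
  ContDiffOn.sum fun i _ ↦
    ((contDiff_apply 𝕜 𝕜 i).comp contDiff_snd).contDiffOn.smul
      ((hv i).comp contDiffOn_fst fun _ hp ↦ hp.1)

section FunctionSpaces

variable {E : Type*} [NormedAddCommGroup E] [NormedSpace ℝ E]

/-- The evaluation `φ ↦ φ(t)` on `C([-r,0],E)`, which is zero for `t` outside `[-r,0]`, as a
continuous linear map. -/
def extFunCLM (t : ℝ) : C(Icc0 r, E) →L[ℝ] E :=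
  if h : t ∈ Icc0 r then ContinuousMap.evalCLM ℝ ⟨t, h⟩ else 0

lemma extFunCLM_apply (t : ℝ) (φ : C(Icc0 r, E)) : extFunCLM t φ = extFun φ t := by
  unfold extFunCLM extFun
  split_ifs <;> rfl

/-- The evaluation `φ ↦ φ'(t)` of the derivative on `C¹([-r,0],E)` as a continuous linear map. -/
def dvCLM (t : ℝ) : C1 r E →L[ℝ] E :=
  (extFunCLM t).comp ((ContinuousLinearMap.snd ℝ _ _).comp (C1sub r E).subtypeL)

lemma dvCLM_apply (t : ℝ) (φ : C1 r E) : dvCLM t φ = dvC φ t := extFunCLM_apply t φ.1.2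

/-- The map `ψ ↦ ψ · e_ν` from `C¹([-r,0],ℝ)` to `C¹([-r,0],ℝⁿ)` as a continuous linear map. -/
def singleC1CLM (ν : Fin n) : C1 r ℝ →L[ℝ] C1 r (Fin n → ℝ) :=
  ((((sCLM n ν).compLeftContinuous ℝ (Icc0 r)).prodMap
    ((sCLM n ν).compLeftContinuous ℝ (Icc0 r))).comp (C1sub r ℝ).subtypeL).codRestrict _
    fun ψ ↦ (singleC1 ν ψ).2

lemma contDiff_singleC1 (ν : Fin n) {m : WithTop ℕ∞} :
    ContDiff ℝ m (singleC1 ν : C1 r ℝ → C1 r (Fin n → ℝ)) :=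
  ContinuousLinearMap.contDiff (𝕜 := ℝ) (E := C1 r ℝ) (F := C1 r (Fin n → ℝ)) (singleC1CLM ν)

lemma sCLM_apply (ν : Fin n) (x : ℝ) : sCLM n ν x = Pi.single ν x := by
  ext j
  by_cases h : j = ν <;> simp [sCLM, h]

lemma dvC_singleC1 (ν : Fin n) (ψ : C1 r ℝ) (t : ℝ) :
    dvC (singleC1 ν ψ) t = Pi.single ν (dvC ψ t) :=
  (extFun_CMsingle ν ψ.1.2 t).trans (sCLM_apply ν _)

lemma dvC_Ymap (ψ : Fin n → C1 r ℝ) (x : Fin n → ℝ) (t : ℝ) :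
    dvC (Ymap ψ x) t = fun ν ↦ x ν * dvC (ψ ν) t := by
  have hsum : Ymap ψ x = ∑ ν, x ν • singleC1 ν (ψ ν) := rfl
  simp only [← dvCLM_apply, hsum, map_sum, map_smul]
  simp only [dvCLM_apply, dvC_singleC1, ← Pi.single_smul, smul_eq_mul]
  exact Finset.univ_sum_single _

lemma contDiffOn_Ymap {B : Type*} [NormedAddCommGroup B] [NormedSpace ℝ B]
    {y : Fin n → B → C1 r ℝ} {D : Set B} {m : WithTop ℕ∞}
    (hy : ∀ ν, ContDiffOn ℝ m (y ν) D) :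
    ContDiffOn ℝ m (fun p : B × (Fin n → ℝ) ↦ Ymap (fun ν ↦ y ν p.1) p.2) (D ×ˢ univ) := by
  have hcol (ν : Fin n) : ContDiffOn ℝ m (fun w ↦ singleC1 ν (y ν w)) D :=
    (contDiff_singleC1 ν).comp_contDiffOn (hy ν)
  exact contDiffOn_sum_smul (E := C1 r (Fin n → ℝ))
    (v := fun ν w ↦ singleC1 ν (y ν w)) hcol

end FunctionSpaces

namespace Setting

variable {B : Type*} [NormedAddCommGroup B] [NormedSpace ℝ B] (S : Setting r n kk B)
  (J : Finset (Fin kk))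

/-- The map `φ ↦ Lφ` on `C¹([-r,0],ℝⁿ)` as a continuous linear map. -/
def LofCLM : C1 r (Fin n → ℝ) →L[ℝ] B :=
  S.L.comp ((ContinuousLinearMap.fst ℝ _ _).comp (C1sub r (Fin n → ℝ)).subtypeL)

lemma LofCLM_apply (φ : C1 r (Fin n → ℝ)) : S.LofCLM φ = S.Lof φ := rfl

lemma LofCLM_Ymap (ψ : Fin n → C1 r ℝ) (x : Fin n → ℝ) :
    S.LofCLM (Ymap ψ x) = ∑ ν, x ν • S.LofCLM (singleC1 ν (ψ ν)) := by
  have hsum : Ymap ψ x = ∑ ν, x ν • singleC1 ν (ψ ν) := rfl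
  simp only [hsum, map_sum, map_smul]

lemma isOpen_WupJ : IsOpen (S.WupJ J) := by
  have hset : S.WupJ J = S.W ∩ ⋂ k ∈ Jᶜ, S.W ∩ S.d k ⁻¹' Ioi 0 := by
    ext w
    simp +contextual [WupJ]
  rw [hset]
  exact S.Wopen.inter <| isOpen_biInter_finset fun k _ ↦
    (S.d_smooth k).continuousOn.isOpen_inter_preimage S.Wopen isOpen_Ioi

variable {S J}

lemma isVerticalRightInverse_Ymap {y : Fin n → B → C1 r ℝ} {D : Set B}
    (hy1 : ∀ ν, ∀ w ∈ D, dvC (y ν w) 0 = 1)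
    (hyL : ∀ ν, ∀ w ∈ D, S.L (singleC1 ν (y ν w)).1.1 = 0) :
    IsVerticalRightInverse (𝕜 := ℝ) (E := C1 r (Fin n → ℝ)) (dvCLM 0) S.LofCLM
      (fun w ↦ Ymap fun ν ↦ y ν w) D where
  map_vertical w hw x := by
    ext ν
    simp [dvCLM_apply, dvC_Ymap, hy1 ν w hw]
  base_vertical w hw x := by
    rw [LofCLM_Ymap]
    exact Finset.sum_eq_zero fun ν _ ↦ by rw [LofCLM_apply, Lof, hyL ν w hw, smul_zero]

lemma verticalProj_eq_RJmap (y : Fin n → B → C1 r ℝ) :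
    verticalProj (𝕜 := ℝ) (E := C1 r (Fin n → ℝ)) (dvCLM 0) S.LofCLM
      (fun w ↦ Ymap fun ν ↦ y ν w) = S.RJmap y := by
  ext1 φ
  rw [verticalProj, dvCLM_apply, LofCLM_apply, RJmap]

end Setting

theorem statement16_general {B : Type*} [NormedAddCommGroup B] [NormedSpace ℝ B]
    (S : Setting r n kk B) (J : Finset (Fin kk)) (y : Fin n → B → C1 r ℝ)
    (hy_smooth : ∀ ν, ContDiffOn ℝ 1 (y ν) (S.WupJ J))
    (hy1 : ∀ ν, ∀ w ∈ S.WupJ J, dvC (y ν w) 0 = 1)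
    (hyL : ∀ ν, ∀ w ∈ S.WupJ J, S.L (singleC1 ν (y ν w)).1.1 = 0)
    (N O : Set (C1 r (Fin n → ℝ))) (σ : C1 r (Fin n → ℝ) → C1 r (Fin n → ℝ))
    (hO : IsOpen O) (hN : N = S.Xf ∩ O) (hsub : S.XfJ J ⊆ N)
    (hO' : ∃ O', IsOpen O' ∧ S.RJmap y '' N = (X0sub r n : Set (C1 r (Fin n → ℝ))) ∩ O')
    (hσ : ContDiffOn ℝ 1 σ (S.RJmap y '' N)) (hinv : LeftInvOn σ (S.RJmap y) N) :
    ∃ (OJ : Set (C1 r (Fin n → ℝ))) (AJ : C1 r (Fin n → ℝ) → C1 r (Fin n → ℝ)),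
      IsOpen OJ ∧ S.XfJ J ⊆ S.Xf ∩ OJ ∧ S.Xf ∩ OJ ⊆ N ∧
      IsOpen (AJ '' OJ) ∧ IsC1DiffeoOn AJ OJ (AJ '' OJ) ∧
      (∀ φ ∈ S.Xf ∩ OJ, AJ φ = S.RJmap y φ) ∧
      (∀ χ ∈ (X0sub r n : Set (C1 r (Fin n → ℝ))) ∩ (S.Xf ∩ OJ), AJ χ = χ) ∧
      AJ '' (S.Xf ∩ OJ) = (X0sub r n : Set (C1 r (Fin n → ℝ))) ∩ AJ '' OJ := by
  subst hN
  obtain ⟨O', hO'_open, himage⟩ := hO'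
  have hX0 : (X0sub r n : Set (C1 r (Fin n → ℝ))) = {φ | dvCLM 0 φ = 0} := by
    ext φ
    rw [mem_ofPred_eq, dvCLM_apply]
    rfl
  rw [hX0] at himage ⊢
  rw [← S.verticalProj_eq_RJmap y] at himage hσ hinv ⊢
  obtain ⟨OJ, AJ, hOJ, hXf, hopen, hdiffeo, heq, hAJ⟩ :=
    exists_straightening (Setting.isVerticalRightInverse_Ymap hy1 hyL)
      (contDiffOn_Ymap hy_smooth) (S.isOpen_WupJ J) hO hO'_open himage hσ hinv
  refine ⟨OJ, AJ, hOJ, ?_, hXf.subset.trans inter_subset_left, hopen, hdiffeo, heq,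
    fun χ hχ ↦ (heq hχ.2).trans (verticalProj_of_map_eq_zero hχ.1), hAJ⟩
  rw [hXf]
  exact fun φ hφ ↦ ⟨hsub hφ, hφ.2.2.1, hφ.2.2.2.2⟩

/-- Theorem 4.8. -/
theorem statement16 (hk : 0 < kk) (hr : 0 < r) (S : Setting r n kk F)
    (J : Finset (Fin kk)) (hJ : J ≠ Finset.univ) (hUJ : (S.UJ J).Nonempty)
    (y : Fin n → F → C1 r ℝ)
    (hy_smooth : ∀ ν, ContDiffOn ℝ 1 (y ν) (S.WupJ J))
    (hy0 : ∀ ν, ∀ w ∈ S.WupJ J, evC (y ν w) 0 = 0)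
    (hy1 : ∀ ν, ∀ w ∈ S.WupJ J, dvC (y ν w) 0 = 1)
    (hyL : ∀ ν, ∀ w ∈ S.WupJ J, S.L (singleC1 ν (y ν w)).1.1 = 0)
    (hyvan : ∀ ν, ∀ w ∈ S.WupJ J, ∀ k ∉ J, ∀ t ∈ Set.Icc (-r) (-(S.d k w)),
      evC (y ν w) t = 0)
    (hyp : S.HypB ∨ S.HypD1B hk ∨ S.U = S.UJ J)
    (N O : Set (C1 r (Fin n → ℝ))) (σ : C1 r (Fin n → ℝ) → C1 r (Fin n → ℝ))
    (hO : IsOpen O) (hN : N = S.Xf ∩ O) (hsub : S.XfJ J ⊆ N)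
    (hO' : ∃ O', IsOpen O' ∧ S.RJmap y '' N = (X0sub r n : Set (C1 r (Fin n → ℝ))) ∩ O')
    (hR1 : ContDiffOn ℝ 1 (S.RJmap y) N) (hinj : Set.InjOn (S.RJmap y) N)
    (hσ : ContDiffOn ℝ 1 σ (S.RJmap y '' N))
    (hinv : Set.InvOn σ (S.RJmap y) N (S.RJmap y '' N)) :
    ∃ (OJ : Set (C1 r (Fin n → ℝ))) (AJ : C1 r (Fin n → ℝ) → C1 r (Fin n → ℝ)),
      IsOpen OJ ∧ S.XfJ J ⊆ S.Xf ∩ OJ ∧ S.Xf ∩ OJ ⊆ N ∧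
      IsOpen (AJ '' OJ) ∧ IsC1DiffeoOn AJ OJ (AJ '' OJ) ∧
      (∀ φ ∈ S.Xf ∩ OJ, AJ φ = S.RJmap y φ) ∧
      (∀ χ ∈ (X0sub r n : Set (C1 r (Fin n → ℝ))) ∩ (S.Xf ∩ OJ), AJ χ = χ) ∧
      AJ '' (S.Xf ∩ OJ) = (X0sub r n : Set (C1 r (Fin n → ℝ))) ∩ AJ '' OJ := by
  exact statement16_general S J y hy_smooth hy1 hyL N O σ hO hN hsub hO' hσ hinv.1
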